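/- arXiv:1503.07955 — 2 statements merged into one kernel-verified Lean document; each statement's English description precedes it below -/
import Mathlib

section
/- Proposition 2.1 (correlation-kernel form of the eigenvalue density, residue form). Assume a₁,…,a_N > 0 are pairwise distinct, let ξ_j(x) := Φ(−a_j;x), g_{ij} := ∫₀^∞ x^{i−1} ξ_j(x) dx for 1 ≤ i,j ≤ N, assume det[g_{ij}] ≠ 0, and set Z_N := N!·det[g_{ij}]. Define K_N(x,y) := ∫₀^∞ u^{ν₀} e^{−u} Ψ(u;x) · ( ∑_{j=1}^N Φ(−a_j;y) e^{−a_j} ∏_{l≠j} ((−u−a_l)/(a_j−a_l)) ) du for x,y > 0. Then for all (x₁,…,x_N) ∈ (0,∞)^N one has (1/Z_N)·det[x_j^{i−1}]_{i,j=1}^N · det[ξ_i(x_j)]_{i,j=1}^N = (1/N!)·det[K_N(x_i,x_j)]_{i,j=1}^N. -/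
open MeasureTheory Filter Topology

noncomputable section


/-- Pochhammer symbol `(a)_j` over `ℝ`. -/
def poch (a : ℝ) (j : ℕ) : ℝ := ∏ i ∈ Finset.range j, (a + i)

/-- The hypergeometric function `₀F₁(b; z)` for complex argument `z`. -/
def hyp0F1 (b : ℝ) (z : ℂ) : ℂ :=
  ∑' k : ℕ, (Real.Gamma b : ℂ) * z ^ k /
    ((Nat.factorial k : ℂ) * (Real.Gamma (b + k) : ℂ))

/-- The hypergeometric function `₀F₁(b; z)` for real argument `z`. -/
def hyp0F1R (b z : ℝ) : ℝ :=
  ∑' k : ℕ, Real.Gamma b * z ^ k / (Nat.factorial k * Real.Gamma (b + k))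

/-- The terminating hypergeometric sum `₁F₁(-k; b; u)`. -/
def hyp1F1T (k : ℕ) (b u : ℝ) : ℝ :=
  ∑ j ∈ Finset.range (k + 1),
    poch (-(k : ℝ)) j / (poch b j * Nat.factorial j) * u ^ j

/-- The function `Ψ(u;x)` of the paper. -/
def Psi (r ν0 : ℕ) (ν : Fin r → ℕ) (u x : ℝ) : ℝ :=
  (1 / Real.Gamma ((ν0 : ℝ) + 1)) *
    ∑' k : ℕ, x ^ k / Nat.factorial k * hyp1F1T k ((ν0 : ℝ) + 1) u *
      ∏ l, 1 / Real.Gamma ((ν l : ℝ) + 1 + k)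

/-- The positive orthant in `ℝ^r`. -/
def posOrth (r : ℕ) : Set (Fin r → ℝ) := {t | ∀ i, 0 < t i}

/-- The function `Φ(v;y)` of the paper, complex `v`. -/
def Phi (r ν0 : ℕ) (ν : Fin r → ℕ) (v : ℂ) (y : ℝ) : ℂ :=
  ((1 / Real.Gamma ((ν0 : ℝ) + 1) : ℝ) : ℂ) *
    ∫ t in posOrth r,
      (((∏ i, (t i) ^ ((ν i : ℝ) - 1) * Real.exp (-t i)) *
          (y / ∏ i, t i) ^ ν0 * Real.exp (-(y / ∏ i, t i)) : ℝ) : ℂ) *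
        hyp0F1 ((ν0 : ℝ) + 1) (-(v * ((y / ∏ i, t i : ℝ) : ℂ)))

/-- The function `Φ(v;y)` of the paper, real `v`. -/
def PhiR (r ν0 : ℕ) (ν : Fin r → ℕ) (v y : ℝ) : ℝ :=
  (1 / Real.Gamma ((ν0 : ℝ) + 1)) *
    ∫ t in posOrth r,
      ((∏ i, (t i) ^ ((ν i : ℝ) - 1) * Real.exp (-t i)) *
          (y / ∏ i, t i) ^ ν0 * Real.exp (-(y / ∏ i, t i))) *
        hyp0F1R ((ν0 : ℝ) + 1) (-(v * (y / ∏ i, t i)))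

/-- The double-contour-integral correlation kernel `K_N(x,y)` of Proposition 2.1,
with `C` the counterclockwise circle of center `c` and radius `R`. -/
def KN (r ν0 N : ℕ) (ν : Fin r → ℕ) (a : Fin N → ℝ) (c : ℂ) (R : ℝ) (x y : ℝ) : ℂ :=
  ∫ u in Set.Ioi (0 : ℝ),
    (2 * Real.pi * Complex.I)⁻¹ *
      ∮ v in C(c, R),
        (u : ℂ) ^ ν0 * Complex.exp (-(u : ℂ) + v) * ((Psi r ν0 ν u x : ℝ) : ℂ) *
          Phi r ν0 ν v y * ((u : ℂ) - v)⁻¹ * ∏ l, ((u : ℂ) + (a l : ℂ)) / (v + (a l : ℂ))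

/-- An admissible contour for `K_N`: a counterclockwise circle contained in the left
half-plane which encloses all the points `-a l`. -/
def AdmCircle (N : ℕ) (a : Fin N → ℝ) (c : ℂ) (R : ℝ) : Prop :=
  0 < R ∧ c.re + R < 0 ∧ ∀ l, ‖-(a l : ℂ) - c‖ < R

/-- The Meijer G-function `G^{1,0}_{0,r+2}(—;0,-ν₀,…,-ν_r | z)`, complex argument. -/
def G1 (r ν0 : ℕ) (ν : Fin r → ℕ) (z : ℂ) : ℂ :=
  ∑' k : ℕ, (-z) ^ k /
    ((Nat.factorial k : ℂ) * (Real.Gamma ((ν0 : ℝ) + 1 + k) : ℂ) *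
      ∏ l, (Real.Gamma ((ν l : ℝ) + 1 + k) : ℂ))

/-- The Meijer G-function `G^{1,0}_{0,r+2}(—;0,-ν₀,…,-ν_r | z)`, real argument. -/
def G1R (r ν0 : ℕ) (ν : Fin r → ℕ) (z : ℝ) : ℝ :=
  ∑' k : ℕ, (-z) ^ k /
    (Nat.factorial k * Real.Gamma ((ν0 : ℝ) + 1 + k) *
      ∏ l, Real.Gamma ((ν l : ℝ) + 1 + k))

/-- `g₀(w) = ∑ (-1)^k w^{ν₀+k}/(k! Γ(ν₀+k+1))`, complex argument. -/
def g0C (ν0 : ℕ) (w : ℂ) : ℂ :=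
  ∑' k : ℕ, (-1 : ℂ) ^ k * w ^ (ν0 + k) /
    ((Nat.factorial k : ℂ) * (Real.Gamma ((ν0 : ℝ) + k + 1) : ℂ))

/-- `g₀(w)`, real argument. -/
def g0R (ν0 : ℕ) (w : ℝ) : ℝ :=
  ∑' k : ℕ, (-1 : ℝ) ^ k * w ^ (ν0 + k) /
    (Nat.factorial k * Real.Gamma ((ν0 : ℝ) + k + 1))

/-- The Meijer G-function `G^{r+1,0}_{0,r+2}(—;ν₀,…,ν_r,0 | z)` for `z > 0`, real form. -/
def G2R (r ν0 : ℕ) (ν : Fin r → ℕ) (z : ℝ) : ℝ :=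
  ∫ t in posOrth r,
    (∏ l, (t l) ^ ((ν l : ℝ) - 1) * Real.exp (-t l)) * g0R ν0 (z / ∏ l, t l)

/-- The critical hard-edge kernel `𝒦^{h,r}(ξ,η;τ)` of Theorem 1.2, the inner integral
running up the imaginary axis `v = i t`. -/
def Kcrit (r ν0 : ℕ) (ν : Fin r → ℕ) (G2 : ℂ → ℂ) (τ ξ η : ℝ) : ℂ :=
  (2 * Real.pi * Complex.I)⁻¹ *
    ∫ u in Set.Ioi (0 : ℝ), ∫ t : ℝ,
      ((u : ℂ) / (Complex.I * t)) ^ ν0 *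
        Complex.exp (-(τ : ℂ) * u - (u : ℂ) ^ 2 / 2 + (τ : ℂ) * (Complex.I * t) +
          (Complex.I * t) ^ 2 / 2) *
        ((u : ℂ) - Complex.I * t)⁻¹ * G1 r ν0 ν ((u * ξ : ℝ) : ℂ) *
        G2 (Complex.I * t * (η : ℂ)) * Complex.I

/-- The deformed critical kernel `𝒦^{h,r}_m(ξ,η;τ,σ)` of Theorem 1.3, the inner integral
running up the vertical line `Re v = -c`. -/
def KcritLine (r ν0 m : ℕ) (ν : Fin r → ℕ) (σ : ℕ → ℝ) (G2 : ℂ → ℂ) (c τ ξ η : ℝ) : ℂ :=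
  (2 * Real.pi * Complex.I)⁻¹ *
    ∫ u in Set.Ioi (0 : ℝ), ∫ t : ℝ,
      ((u : ℂ) / (-(c : ℂ) + Complex.I * t)) ^ ν0 *
        Complex.exp (-(τ : ℂ) * u - (u : ℂ) ^ 2 / 2 +
          (τ : ℂ) * (-(c : ℂ) + Complex.I * t) + (-(c : ℂ) + Complex.I * t) ^ 2 / 2) *
        ((u : ℂ) - (-(c : ℂ) + Complex.I * t))⁻¹ *
        (∏ j ∈ Finset.range m,
          ((u : ℂ) + (σ j : ℂ)) / ((-(c : ℂ) + Complex.I * t) + (σ j : ℂ))) *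
        G1 r ν0 ν ((u * ξ : ℝ) : ℂ) * G2 ((-(c : ℂ) + Complex.I * t) * (η : ℂ)) * Complex.I




/-- `Ψ(u;x)` in the case `r = 0`. -/
def Psi0 (ν0 : ℕ) (u x : ℝ) : ℝ :=
  Real.exp x * hyp0F1R ((ν0 : ℝ) + 1) (-(u * x)) / Real.Gamma ((ν0 : ℝ) + 1)

/-- `Φ(v;y)` in the case `r = 0`, complex `v`. -/
def Phi0 (ν0 : ℕ) (v : ℂ) (y : ℝ) : ℂ :=
  ((y ^ ν0 * Real.exp (-y) / Real.Gamma ((ν0 : ℝ) + 1) : ℝ) : ℂ) *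
    hyp0F1 ((ν0 : ℝ) + 1) (-(v * (y : ℂ)))

/-- The kernel `K_N` in the case `r = 0`. -/
def KN0 (ν0 N : ℕ) (a : Fin N → ℝ) (c : ℂ) (R : ℝ) (x y : ℝ) : ℂ :=
  ∫ u in Set.Ioi (0 : ℝ),
    (2 * Real.pi * Complex.I)⁻¹ *
      ∮ v in C(c, R),
        (u : ℂ) ^ ν0 * Complex.exp (-(u : ℂ) + v) * ((Psi0 ν0 u x : ℝ) : ℂ) *
          Phi0 ν0 v y * ((u : ℂ) - v)⁻¹ * ∏ l, ((u : ℂ) + (a l : ℂ)) / (v + (a l : ℂ))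

/-- Laguerre polynomial `L_n^{ν}(x)`. -/
def laguerreL (n νp : ℕ) (x : ℝ) : ℝ :=
  ∑ k ∈ Finset.range (n + 1),
    (-1 : ℝ) ^ k * (Nat.choose (n + νp) (n - k)) * x ^ k / Nat.factorial k

/-- The function `Ψ^{(μ)}(u;x)` of Section 4. -/
def PsiMu (r ν0 : ℕ) (μ ν : Fin r → ℕ) (u x : ℝ) : ℝ :=
  (1 / Real.Gamma ((ν0 : ℝ) + 1)) *
    ∑' k : ℕ, x ^ k / Nat.factorial k * hyp1F1T k ((ν0 : ℝ) + 1) u *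
      ∏ l, Real.Gamma ((μ l : ℝ) + 1 + k) / Real.Gamma ((ν l : ℝ) + 1 + k)

/-- The open unit cube in `ℝ^r`. -/
def unitCube (r : ℕ) : Set (Fin r → ℝ) := {t | ∀ i, 0 < t i ∧ t i < 1}

/-- The function `Φ^{(μ)}(v;y)` of Section 4, complex `v`. -/
def PhiMu (r ν0 : ℕ) (μ ν : Fin r → ℕ) (v : ℂ) (y : ℝ) : ℂ :=
  ((1 / (Real.Gamma ((ν0 : ℝ) + 1) * ∏ l, Real.Gamma ((μ l : ℝ) - (ν l : ℝ))) : ℝ) : ℂ) *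
    ∫ t in unitCube r,
      (((∏ l, (t l) ^ ((ν l : ℝ) - 1) * (1 - t l) ^ ((μ l : ℝ) - (ν l : ℝ) - 1)) *
          (y / ∏ l, t l) ^ ν0 * Real.exp (-(y / ∏ l, t l)) : ℝ) : ℂ) *
        hyp0F1 ((ν0 : ℝ) + 1) (-(v * ((y / ∏ l, t l : ℝ) : ℂ)))

/-- The function `Φ^{(μ)}(v;y)` of Section 4, real `v`. -/
def PhiMuR (r ν0 : ℕ) (μ ν : Fin r → ℕ) (v y : ℝ) : ℝ :=
  (1 / (Real.Gamma ((ν0 : ℝ) + 1) * ∏ l, Real.Gamma ((μ l : ℝ) - (ν l : ℝ)))) *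
    ∫ t in unitCube r,
      ((∏ l, (t l) ^ ((ν l : ℝ) - 1) * (1 - t l) ^ ((μ l : ℝ) - (ν l : ℝ) - 1)) *
          (y / ∏ l, t l) ^ ν0 * Real.exp (-(y / ∏ l, t l))) *
        hyp0F1R ((ν0 : ℝ) + 1) (-(v * (y / ∏ l, t l)))

/-- The kernel `K_N` for the truncated-unitary product of Section 4. -/
def KNmu (r ν0 N : ℕ) (μ ν : Fin r → ℕ) (a : Fin N → ℝ) (c : ℂ) (R : ℝ) (x y : ℝ) : ℂ :=
  ∫ u in Set.Ioi (0 : ℝ),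
    (2 * Real.pi * Complex.I)⁻¹ *
      ∮ v in C(c, R),
        (u : ℂ) ^ ν0 * Complex.exp (-(u : ℂ) + v) * ((PsiMu r ν0 μ ν u x : ℝ) : ℂ) *
          PhiMu r ν0 μ ν v y * ((u : ℂ) - v)⁻¹ * ∏ l, ((u : ℂ) + (a l : ℂ)) / (v + (a l : ℂ))

/-- Mixed domain `(0,1)^q × (0,∞)^{r-q}`. -/
def mixedSet (r q : ℕ) : Set (Fin r → ℝ) := {t | ∀ l, 0 < t l ∧ ((l : ℕ) < q → t l < 1)}

/-- The Meijer G-function `G^{1,q}_{q,r+2}(-μ₁,…,-μ_q; 0,-ν₀,…,-ν_r | z)`, real form. -/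
def G1qR (r ν0 q : ℕ) (μ ν : Fin r → ℕ) (z : ℝ) : ℝ :=
  ∑' k : ℕ, (-z) ^ k *
    (∏ l ∈ Finset.univ.filter fun l : Fin r => (l : ℕ) < q, Real.Gamma ((μ l : ℝ) + 1 + k)) /
    (Nat.factorial k * Real.Gamma ((ν0 : ℝ) + 1 + k) *
      ∏ l, Real.Gamma ((ν l : ℝ) + 1 + k))

/-- The Meijer G-function `G^{1,q}_{q,r+2}(-μ₁,…,-μ_q; 0,-ν₀,…,-ν_r | z)`, complex form. -/
def G1q (r ν0 q : ℕ) (μ ν : Fin r → ℕ) (z : ℂ) : ℂ :=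
  ∑' k : ℕ, (-z) ^ k *
    ((∏ l ∈ Finset.univ.filter fun l : Fin r => (l : ℕ) < q,
      Real.Gamma ((μ l : ℝ) + 1 + k) : ℝ) : ℂ) /
    ((Nat.factorial k : ℂ) * (Real.Gamma ((ν0 : ℝ) + 1 + k) : ℂ) *
      ∏ l, (Real.Gamma ((ν l : ℝ) + 1 + k) : ℂ))

/-- The Meijer G-function `G^{r+1,0}_{q,r+2}(μ₁,…,μ_q; ν₀,…,ν_r,0 | z)` for `z > 0`. -/
def G2qR (r ν0 q : ℕ) (μ ν : Fin r → ℕ) (z : ℝ) : ℝ :=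
  ∫ t in mixedSet r q,
    (∏ l : Fin r, if l.val < q then
        (t l) ^ ((ν l : ℝ) - 1) * (1 - t l) ^ ((μ l : ℝ) - (ν l : ℝ) - 1) /
          Real.Gamma ((μ l : ℝ) - (ν l : ℝ))
      else (t l) ^ ((ν l : ℝ) - 1) * Real.exp (-t l)) *
      g0R ν0 (z / ∏ l, t l)



/-- Laguerre-type polynomial `₁F₁(-k; ν₀+1; X)`. -/
def lagP (ν0 k : ℕ) : Polynomial ℝ :=
  ∑ j ∈ Finset.range (k + 1), Polynomial.C ((-1 : ℝ) ^ j * (k.choose j : ℝ) *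
    ((Nat.factorial ν0 : ℝ) / (Nat.factorial (ν0 + j) : ℝ))) * Polynomial.X ^ j

lemma poch_neg (k j : ℕ) (h : j ≤ k) :
    poch (-(k : ℝ)) j = (-1) ^ j * (k.descFactorial j : ℝ) := by
  induction j with
  | zero => simp [poch]
  | succ j ih =>
    have h1 := ih (by omega)
    unfold poch at h1 ⊢
    rw [Finset.prod_range_succ, h1, Nat.descFactorial_succ]
    push_cast [Nat.cast_sub (show j ≤ k by omega)]
    ring

lemma poch_succ (n j : ℕ) :
    poch ((n : ℝ) + 1) j = (Nat.factorial (n + j) : ℝ) / (Nat.factorial n : ℝ) := by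
  induction j with
  | zero => simp [poch, Nat.factorial_ne_zero]
  | succ j ih =>
    unfold poch at ih ⊢
    rw [Finset.prod_range_succ, ih, ← add_assoc, Nat.factorial_succ]
    push_cast
    ring

lemma hyp1F1T_eq (ν0 k : ℕ) (u : ℝ) : hyp1F1T k ((ν0 : ℝ) + 1) u = (lagP ν0 k).eval u := by
  unfold hyp1F1T lagP
  rw [Polynomial.eval_finsetSum]
  refine Finset.sum_congr rfl fun j hj => ?_
  have hj' : j ≤ k := by simpa [Nat.lt_succ_iff] using hj
  rw [poch_neg k j hj', poch_succ, Nat.descFactorial_eq_factorial_mul_choose]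
  simp only [Polynomial.eval_mul, Polynomial.eval_C, Polynomial.eval_pow, Polynomial.eval_X]
  have h1 : (Nat.factorial j : ℝ) ≠ 0 := by exact_mod_cast Nat.factorial_ne_zero j
  have h2 : (Nat.factorial ν0 : ℝ) ≠ 0 := by exact_mod_cast Nat.factorial_ne_zero ν0
  have h3 : (Nat.factorial (ν0 + j) : ℝ) ≠ 0 := by exact_mod_cast Nat.factorial_ne_zero _
  push_cast
  field_simp

lemma integrable_pow_exp (n : ℕ) :
    IntegrableOn (fun u : ℝ => u ^ n * Real.exp (-u)) (Set.Ioi 0) := by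
  have h := Real.GammaIntegral_convergent (s := (n : ℝ) + 1) (by positivity)
  refine h.congr_fun (fun u _ => ?_) measurableSet_Ioi
  simp [mul_comm]

lemma integral_pow_exp (n : ℕ) :
    ∫ u in Set.Ioi (0 : ℝ), u ^ n * Real.exp (-u) = (Nat.factorial n : ℝ) := by
  rw [← Real.Gamma_nat_eq_factorial, Real.Gamma_eq_integral (by positivity)]
  refine setIntegral_congr_fun measurableSet_Ioi (fun u _ => ?_)
  simp [mul_comm]

lemma integrable_poly (ν0 : ℕ) (P : Polynomial ℝ) :
    IntegrableOn (fun u : ℝ => u ^ ν0 * Real.exp (-u) * P.eval u) (Set.Ioi 0) := by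
  have : (fun u : ℝ => u ^ ν0 * Real.exp (-u) * P.eval u) =
      fun u => ∑ j ∈ Finset.range (P.natDegree + 1),
        P.coeff j * (u ^ (ν0 + j) * Real.exp (-u)) := by
    ext u
    rw [Polynomial.eval_eq_sum_range, Finset.mul_sum]
    refine Finset.sum_congr rfl fun j _ => ?_
    rw [pow_add]; ring
  rw [this]
  exact integrable_finsetSum _ fun j _ => (integrable_pow_exp (ν0 + j)).const_mul _

/-- Laguerre weight functional. -/
def wI (ν0 : ℕ) : Polynomial ℝ →ₗ[ℝ] ℝ where
  toFun P := ∫ u in Set.Ioi (0 : ℝ), u ^ ν0 * Real.exp (-u) * P.eval u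
  map_add' P Q := by
    rw [← integral_add (integrable_poly ν0 P) (integrable_poly ν0 Q)]
    congr 1; ext u; simp [mul_add]
  map_smul' c P := by
    rw [RingHom.id_apply, smul_eq_mul, ← integral_const_mul]
    congr 1; ext u; simp; ring

lemma wI_apply (ν0 : ℕ) (P : Polynomial ℝ) :
    wI ν0 P = ∫ u in Set.Ioi (0 : ℝ), u ^ ν0 * Real.exp (-u) * P.eval u := rfl

lemma wI_X_pow (ν0 m : ℕ) : wI ν0 (Polynomial.X ^ m) = (Nat.factorial (ν0 + m) : ℝ) := by
  rw [wI_apply, ← integral_pow_exp]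
  congr 1; ext u; simp [pow_add]; ring

lemma wI_C_mul (ν0 : ℕ) (c : ℝ) (P : Polynomial ℝ) :
    wI ν0 (Polynomial.C c * P) = c * wI ν0 P := by
  rw [← Polynomial.smul_eq_C_mul, map_smul, smul_eq_mul]

lemma wI_X_mul_lagP (ν0 m k : ℕ) (h : m ≤ k) :
    wI ν0 (Polynomial.X ^ m * lagP ν0 k) =
      if m = k then (Nat.factorial ν0 : ℝ) * (-1) ^ k * (Nat.factorial k : ℝ) else 0 := by
  set P : Polynomial ℝ := (ascPochhammer ℝ m).comp (Polynomial.X + Polynomial.C ((ν0 : ℝ) + 1))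
    with hP
  have hdeg : P.natDegree = m := by
    rw [hP, Polynomial.natDegree_comp, ascPochhammer_natDegree, Polynomial.natDegree_X_add_C,
      mul_one]
  have hmon : P.leadingCoeff = 1 := by
    have := (monic_ascPochhammer ℝ m).comp_X_add_C ((ν0 : ℝ) + 1)
    exact this
  have heval (j : ℕ) : P.eval (j : ℝ) =
      (Nat.factorial (ν0 + j + m) : ℝ) / (Nat.factorial (ν0 + j) : ℝ) := by
    rw [hP, Polynomial.eval_comp]
    simp only [Polynomial.eval_add, Polynomial.eval_X, Polynomial.eval_C]
    have := ascPochhammer_nat_eq_ascFactorial (ν0 + j + 1) m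
    have h2 := Nat.factorial_mul_ascFactorial (ν0 + j) m
    have h3 : ((ascPochhammer ℝ m).eval ((j : ℝ) + (ν0 + 1))) =
        (((ν0 + j + 1).ascFactorial m : ℕ) : ℝ) := by
      rw [← this, ascPochhammer_eval_cast]
      push_cast
      ring_nf
    rw [h3, eq_div_iff (by exact_mod_cast Nat.factorial_ne_zero _), mul_comm]
    exact_mod_cast h2
  have hsum := fwdDiff_iter_eq_sum_shift (1 : ℝ) P.eval k 0
  have hlhs : wI ν0 (Polynomial.X ^ m * lagP ν0 k) = (Nat.factorial ν0 : ℝ) * (-1) ^ k *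
      ((fwdDiff (1 : ℝ))^[k] P.eval 0) := by
    rw [hsum, lagP, Finset.mul_sum, map_sum, Finset.mul_sum]
    refine Finset.sum_congr rfl fun j hj => ?_
    have hj' : j ≤ k := by simpa [Nat.lt_succ_iff] using hj
    rw [show ∀ c : ℝ, Polynomial.X ^ m * (Polynomial.C c * Polynomial.X ^ j) =
      Polynomial.C c * Polynomial.X ^ (j + m) by intro c; ring, wI_C_mul, wI_X_pow]
    rw [zero_add, nsmul_eq_mul, mul_one, heval, zsmul_eq_mul]
    obtain ⟨d, rfl⟩ := Nat.exists_eq_add_of_le hj'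
    have h5 : ((-1 : ℝ)) ^ (d * 2) = 1 := by rw [mul_comm, pow_mul]; simp
    rw [Nat.add_sub_cancel_left, ← add_assoc]
    push_cast
    rw [pow_add]
    ring_nf
    rw [h5]; ring
  rw [hlhs]
  split_ifs with hmk
  · have := congrFun P.fwdDiff_iter_degree_eq_factorial 0
    rw [hdeg, hmk] at this
    rw [this, hmon]
    simp
  · have := Polynomial.fwdDiff_iter_eq_zero_of_degree_lt (P := P) (n := k) (by omega)
    rw [this]; simp

lemma wI_lagP_of_lt (ν0 k i : ℕ) (h : i < k) : wI ν0 (lagP ν0 i * lagP ν0 k) = 0 := by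
  conv_lhs => rw [lagP, Finset.sum_mul, map_sum]
  refine Finset.sum_eq_zero fun j hj => ?_
  have hj' : j ≤ i := by simpa [Nat.lt_succ_iff] using hj
  rw [mul_assoc, wI_C_mul, wI_X_mul_lagP _ _ _ (by omega), if_neg (by omega), mul_zero]

lemma wI_lagP_self (ν0 k : ℕ) : wI ν0 (lagP ν0 k * lagP ν0 k) =
    (Nat.factorial k : ℝ) * (Nat.factorial ν0 : ℝ) ^ 2 / (Nat.factorial (ν0 + k) : ℝ) := by
  conv_lhs => rw [lagP, Finset.sum_mul, map_sum, ← lagP]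
  rw [Finset.sum_range_succ, Finset.sum_eq_zero]
  · rw [mul_assoc, wI_C_mul, wI_X_mul_lagP _ _ _ le_rfl, if_pos rfl]
    have h5 : ((-1 : ℝ)) ^ (k * 2) = 1 := by rw [mul_comm, pow_mul]; simp
    simp only [Nat.choose_self, Nat.cast_one]
    ring_nf
    rw [h5]; ring
  · intro j hj
    have hj' : j < k := by simpa using hj
    rw [mul_assoc, wI_C_mul, wI_X_mul_lagP _ _ _ (by omega), if_neg (by omega), mul_zero]

lemma wI_lagP (ν0 k i : ℕ) : wI ν0 (lagP ν0 k * lagP ν0 i) = if k = i then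
    (Nat.factorial k : ℝ) * (Nat.factorial ν0 : ℝ) ^ 2 / (Nat.factorial (ν0 + k) : ℝ) else 0 := by
  rcases lt_trichotomy k i with h | h | h
  · rw [if_neg (by omega), wI_lagP_of_lt _ _ _ h]
  · subst h; rw [if_pos rfl, wI_lagP_self]
  · rw [if_neg (by omega), mul_comm, wI_lagP_of_lt _ _ _ h]

lemma natDegree_lagP (ν0 k : ℕ) : (lagP ν0 k).natDegree ≤ k := by
  unfold lagP
  refine Polynomial.natDegree_sum_le_of_forall_le _ _ fun j hj => ?_
  have hj' : j ≤ k := by simpa [Nat.lt_succ_iff] using hj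
  exact (Polynomial.natDegree_C_mul_X_pow_le _ _).trans hj'

lemma hasSum_transfer {f g : ℕ → ℝ} {s t : ℝ} (h : HasSum f s) (hf : ∀ k, g k = f k)
    (hs : t = s) : HasSum g t := by
  have : g = f := funext hf
  rw [this, hs]
  exact h

lemma gamma_nat' (n k : ℕ) : Real.Gamma ((n : ℝ) + 1 + k) = (Nat.factorial (n + k) : ℝ) := by
  rw [← Real.Gamma_nat_eq_factorial]; push_cast; ring_nf

/-- Coefficients of `Ψ` in the Laguerre expansion. -/
def cPsi (r ν0 : ℕ) (ν : Fin r → ℕ) (x : ℝ) (k : ℕ) : ℝ :=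
  (1 / Real.Gamma ((ν0 : ℝ) + 1)) * (x ^ k / Nat.factorial k *
    ∏ l, 1 / Real.Gamma ((ν l : ℝ) + 1 + k))

lemma cPsi_bound (r ν0 : ℕ) (ν : Fin r → ℕ) (x : ℝ) (k : ℕ) :
    |cPsi r ν0 ν x k| ≤ |x| ^ k / Nat.factorial k := by
  have h1 : |∏ l, 1 / Real.Gamma ((ν l : ℝ) + 1 + k)| ≤ 1 := by
    rw [Finset.abs_prod]
    refine Finset.prod_le_one (fun _ _ => abs_nonneg _) fun l _ => ?_
    rw [gamma_nat', abs_of_nonneg (by positivity)]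
    rw [div_le_one (by exact_mod_cast Nat.factorial_pos _)]
    exact_mod_cast Nat.factorial_pos _
  have h0 : |1 / Real.Gamma ((ν0 : ℝ) + 1)| ≤ 1 := by
    rw [Real.Gamma_nat_eq_factorial, abs_of_nonneg (by positivity)]
    rw [div_le_one (by exact_mod_cast Nat.factorial_pos _)]
    exact_mod_cast Nat.factorial_pos _
  unfold cPsi
  have h2 : |x ^ k / (Nat.factorial k : ℝ)| = |x| ^ k / Nat.factorial k := by
    rw [abs_div, abs_pow, Nat.abs_cast]
  rw [abs_mul, abs_mul, h2]
  have h3 : 0 ≤ |x| ^ k / (Nat.factorial k : ℝ) := by positivity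
  calc _ ≤ 1 * (|x| ^ k / (Nat.factorial k : ℝ) * 1) := by gcongr
    _ = _ := by ring

lemma wI_lagP_self_le (ν0 k : ℕ) :
    wI ν0 (lagP ν0 k * lagP ν0 k) ≤ (Nat.factorial ν0 : ℝ) ^ 2 := by
  rw [wI_lagP_self, div_le_iff₀ (by exact_mod_cast Nat.factorial_pos _), mul_comm]
  have : (Nat.factorial k : ℝ) ≤ Nat.factorial (ν0 + k) := by
    exact_mod_cast Nat.factorial_le (by omega)
  gcongr

lemma hasSum_Psi (r ν0 : ℕ) (ν : Fin r → ℕ) (x : ℝ) (P : Polynomial ℝ) :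
    HasSum (fun k => cPsi r ν0 ν x k * wI ν0 (lagP ν0 k * P))
      (∫ u in Set.Ioi (0 : ℝ), u ^ ν0 * Real.exp (-u) * Psi r ν0 ν u x * P.eval u) := by
  set F : ℕ → ℝ → ℝ := fun k u =>
    cPsi r ν0 ν x k * (u ^ ν0 * Real.exp (-u) * (lagP ν0 k * P).eval u) with hF
  have hint (k : ℕ) : Integrable (F k) (volume.restrict (Set.Ioi 0)) :=
    (integrable_poly ν0 (lagP ν0 k * P)).const_mul _
  have hsum : Summable fun k => ∫ u in Set.Ioi (0 : ℝ), ‖F k u‖ := by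
    refine Summable.of_nonneg_of_le (fun k => integral_nonneg fun u => norm_nonneg _)
      (fun k => ?_) ((Real.summable_pow_div_factorial |x|).mul_right
        (((Nat.factorial ν0 : ℝ) ^ 2 + wI ν0 (P * P)) / 2))
    have hb : ∫ u in Set.Ioi (0 : ℝ), ‖F k u‖ ≤ ∫ u in Set.Ioi (0 : ℝ), |cPsi r ν0 ν x k| *
        (((u ^ ν0 * Real.exp (-u) * (lagP ν0 k * lagP ν0 k).eval u) +
          (u ^ ν0 * Real.exp (-u) * (P * P).eval u)) / 2) := by
      refine setIntegral_mono_on (hint k).norm ?_ measurableSet_Ioi fun u hu => ?_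
      · exact (((integrable_poly ν0 _).add (integrable_poly ν0 _)).div_const 2).const_mul _
      · have hu : (0 : ℝ) < u := hu
        simp only [hF, norm_mul, Real.norm_eq_abs, Polynomial.eval_mul]
        rw [abs_of_nonneg (show 0 ≤ u ^ ν0 by positivity), abs_of_nonneg (Real.exp_pos _).le]
        gcongr
        have := two_mul_le_add_sq |(lagP ν0 k).eval u| |P.eval u|
        rw [sq_abs, sq_abs] at this
        have hw : 0 ≤ u ^ ν0 * Real.exp (-u) := by positivity
        nlinarith
    refine hb.trans ?_
    rw [integral_const_mul, integral_div, integral_add (integrable_poly ν0 _)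
      (integrable_poly ν0 _), ← wI_apply, ← wI_apply]
    have h1 := cPsi_bound r ν0 ν x k
    have h2 := wI_lagP_self_le ν0 k
    have h3 (P : Polynomial ℝ) : 0 ≤ wI ν0 (P * P) := by
      rw [wI_apply]
      refine setIntegral_nonneg measurableSet_Ioi fun u hu => ?_
      have hu : (0 : ℝ) < u := hu
      rw [Polynomial.eval_mul]
      exact mul_nonneg (by positivity) (mul_self_nonneg _)
    have h4 := h3 P
    have h5 := h3 (lagP ν0 k)
    gcongr
  have h := hasSum_integral_of_summable_integral_norm hint hsum
  refine hasSum_transfer h (fun k => ?_) ?_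
  · rw [wI_apply, ← integral_const_mul]
  · congr 1
    ext u
    simp only [hF, Psi, cPsi, hyp1F1T_eq, Polynomial.eval_mul]
    rw [← tsum_mul_left, ← tsum_mul_left, ← tsum_mul_right]
    · refine tsum_congr fun k => ?_
      ring

/-- Linearity of the `Ψ`-functional. -/
lemma Psi_linear (r ν0 N : ℕ) (ν : Fin r → ℕ) (x : ℝ) (P : Fin N → Polynomial ℝ) (b : Fin N → ℝ) :
    ∫ u in Set.Ioi (0 : ℝ), u ^ ν0 * Real.exp (-u) * Psi r ν0 ν u x *
      (∑ j, Polynomial.C (b j) * P j).eval u =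
    ∑ j, b j * ∫ u in Set.Ioi (0 : ℝ), u ^ ν0 * Real.exp (-u) * Psi r ν0 ν u x * (P j).eval u := by
  have h1 := hasSum_Psi r ν0 ν x (∑ j, Polynomial.C (b j) * P j)
  have h2 := hasSum_sum (s := Finset.univ) fun j (_ : j ∈ Finset.univ) =>
    (hasSum_Psi r ν0 ν x (P j)).mul_left (b j)
  refine h1.unique ?_
  refine hasSum_transfer h2 (fun k => ?_) rfl
  rw [Finset.mul_sum, map_sum, Finset.mul_sum]
  refine Finset.sum_congr rfl fun j _ => ?_
  rw [mul_left_comm, wI_C_mul]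
  ring

lemma Psi_lagP (r ν0 : ℕ) (ν : Fin r → ℕ) (x : ℝ) (i : ℕ) :
    (∏ l, (Nat.factorial (ν l + i) : ℝ)) * ((Nat.factorial (ν0 + i) : ℝ) / Nat.factorial ν0) *
    ∫ u in Set.Ioi (0 : ℝ), u ^ ν0 * Real.exp (-u) * Psi r ν0 ν u x * (lagP ν0 i).eval u
      = x ^ i := by
  have h1 := hasSum_Psi r ν0 ν x (lagP ν0 i)
  have h2 := hasSum_single (f := fun k => cPsi r ν0 ν x k * wI ν0 (lagP ν0 k * lagP ν0 i)) i
    (fun k hk => by rw [wI_lagP, if_neg hk, mul_zero])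
  rw [h1.unique h2, wI_lagP, if_pos rfl]
  unfold cPsi
  simp only [gamma_nat', Real.Gamma_nat_eq_factorial]
  rw [Finset.prod_div_distrib]
  have e1 : (Nat.factorial i : ℝ) ≠ 0 := by exact_mod_cast Nat.factorial_ne_zero _
  have e2 : (Nat.factorial ν0 : ℝ) ≠ 0 := by exact_mod_cast Nat.factorial_ne_zero _
  have e3 : (Nat.factorial (ν0 + i) : ℝ) ≠ 0 := by exact_mod_cast Nat.factorial_ne_zero _
  have e4 : (∏ l, (Nat.factorial (ν l + i) : ℝ)) ≠ 0 :=
    Finset.prod_ne_zero_iff.2 fun l _ => by exact_mod_cast Nat.factorial_ne_zero _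
  simp only [Finset.prod_const_one]
  field_simp

lemma hasSum_choose (a : ℝ) (j : ℕ) :
    HasSum (fun k : ℕ => a ^ k / (Nat.factorial k : ℝ) * (k.choose j : ℝ))
      (a ^ j / (Nat.factorial j : ℝ) * Real.exp a) := by
  rw [← hasSum_nat_add_iff' j, Finset.sum_eq_zero, sub_zero]
  · have h := (NormedSpace.expSeries_div_hasSum_exp (𝔸 := ℝ) a).mul_left
      (a ^ j / (Nat.factorial j : ℝ))
    rw [← Real.exp_eq_exp_ℝ] at h
    refine hasSum_transfer h (fun k => ?_) rfl
    have e := Nat.add_choose_mul_factorial_mul_factorial k j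
    have e' : ((k + j).choose j : ℝ) * Nat.factorial k * Nat.factorial j
        = Nat.factorial (k + j) := by
      exact_mod_cast e
    have e1 : (Nat.factorial k : ℝ) ≠ 0 := by exact_mod_cast Nat.factorial_ne_zero _
    have e2 : (Nat.factorial j : ℝ) ≠ 0 := by exact_mod_cast Nat.factorial_ne_zero _
    have e3 : (Nat.factorial (k + j) : ℝ) ≠ 0 := by exact_mod_cast Nat.factorial_ne_zero _
    field_simp
    rw [pow_add, ← e']
    ring
  · intro k hk
    rw [Nat.choose_eq_zero_of_lt (by simpa using hk)]
    simp

lemma hasSum_moment (ν0 i : ℕ) (a : ℝ) :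
    HasSum (fun k : ℕ => a ^ k / (Nat.factorial k : ℝ) *
        ((Nat.factorial (ν0 + i + k) : ℝ) / (Nat.factorial (ν0 + k) : ℝ)))
      (Real.exp a * ((Nat.factorial (ν0 + i) : ℝ) / Nat.factorial ν0) *
        (lagP ν0 i).eval (-a)) := by
  have h := hasSum_sum (s := Finset.range (i + 1)) fun j (_ : j ∈ Finset.range (i + 1)) =>
    (hasSum_choose a j).mul_left ((Nat.factorial i : ℝ) * ((ν0 + i).choose (i - j) : ℝ))
  refine hasSum_transfer h (fun k => ?_) ?_
  · have e1 := Nat.add_choose_mul_factorial_mul_factorial (ν0 + k) i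
    rw [show ν0 + k + i = k + (ν0 + i) by ring, Nat.add_choose_eq,
      Finset.Nat.sum_antidiagonal_eq_sum_range_succ_mk] at e1
    have e2 : (Nat.factorial (ν0 + k) : ℝ) ≠ 0 := by exact_mod_cast Nat.factorial_ne_zero _
    have e3 : ((Nat.factorial (ν0 + i + k) : ℝ) / (Nat.factorial (ν0 + k) : ℝ)) =
        (∑ j ∈ Finset.range (i + 1), (k.choose j : ℝ) * ((ν0 + i).choose (i - j) : ℝ)) *
          Nat.factorial i := by
      rw [div_eq_iff e2, show ν0 + i + k = k + (ν0 + i) by ring, ← e1]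
      push_cast
      ring
    rw [e3, Finset.sum_mul, Finset.mul_sum]
    refine Finset.sum_congr rfl fun j _ => ?_
    ring
  · unfold lagP
    rw [Polynomial.eval_finsetSum, Finset.mul_sum]
    refine Finset.sum_congr rfl fun j hj => ?_
    have hj' : j ≤ i := by simpa [Nat.lt_succ_iff] using hj
    obtain ⟨d, rfl⟩ := Nat.exists_eq_add_of_le hj'
    simp only [Polynomial.eval_mul, Polynomial.eval_C, Polynomial.eval_pow, Polynomial.eval_X]
    rw [Nat.add_sub_cancel_left]
    have f1 := Nat.add_choose_mul_factorial_mul_factorial j d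
    have f2 := Nat.add_choose_mul_factorial_mul_factorial (ν0 + j) d
    rw [← Nat.choose_symm_add] at f1
    rw [add_assoc] at f2
    have f1' : ((j + d).choose j : ℝ) = Nat.factorial (j + d) /
        (Nat.factorial j * Nat.factorial d) := by
      rw [eq_div_iff (by positivity)]; rw [← mul_assoc]; exact_mod_cast f1
    have f2' : ((ν0 + (j + d)).choose d : ℝ) = Nat.factorial (ν0 + (j + d)) /
        (Nat.factorial (ν0 + j) * Nat.factorial d) := by
      rw [eq_div_iff (by positivity)]; rw [← mul_assoc]; exact_mod_cast f2
    rw [f1', f2', neg_pow a]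
    have h5 : ((-1 : ℝ)) ^ j * (-1) ^ j = 1 := by rw [← mul_pow]; simp
    have e2 : (Nat.factorial ν0 : ℝ) ≠ 0 := by exact_mod_cast Nat.factorial_ne_zero _
    field_simp
    rw [pow_two, h5, one_mul]

/-- One-dimensional profile of `Φ`. -/
def phi1 (ν0 : ℕ) (a s : ℝ) : ℝ :=
  (1 / Real.Gamma ((ν0 : ℝ) + 1)) * (s ^ ν0 * Real.exp (-s) *
    hyp0F1R ((ν0 : ℝ) + 1) (-(-a * s)))

lemma measurable_hyp0F1R (b : ℝ) : Measurable (hyp0F1R b) := by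
  unfold hyp0F1R
  exact Measurable.tsum fun k => by fun_prop

lemma measurable_phi1 (ν0 : ℕ) (a : ℝ) : Measurable (phi1 ν0 a) := by
  unfold phi1
  have := measurable_hyp0F1R ((ν0 : ℝ) + 1)
  fun_prop

lemma phi1_nonneg (ν0 : ℕ) {a s : ℝ} (ha : 0 < a) (hs : 0 < s) : 0 ≤ phi1 ν0 a s := by
  unfold phi1 hyp0F1R
  have h : 0 ≤ ∑' k : ℕ, Real.Gamma ((ν0 : ℝ) + 1) * (-(-a * s)) ^ k /
      (Nat.factorial k * Real.Gamma ((ν0 : ℝ) + 1 + k)) := by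
    refine tsum_nonneg fun k => ?_
    rw [gamma_nat', Real.Gamma_nat_eq_factorial, neg_mul, neg_neg]
    positivity
  rw [Real.Gamma_nat_eq_factorial] at h ⊢
  positivity

/-- The moment value. -/
def mom (ν0 i : ℕ) (a : ℝ) : ℝ :=
  Real.exp a * ((Nat.factorial (ν0 + i) : ℝ) / Nat.factorial ν0) * (lagP ν0 i).eval (-a)

lemma mom_pos (ν0 i : ℕ) {a : ℝ} (ha : 0 < a) : 0 < mom ν0 i a := by
  unfold mom
  have h := hasSum_moment ν0 i a
  refine h.summable.tsum_pos (fun k => ?_) 0 ?_ |>.trans_eq h.tsum_eq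
  all_goals positivity

lemma integral_phi1 (ν0 i : ℕ) {a : ℝ} (ha : 0 < a) :
    ∫ s in Set.Ioi (0 : ℝ), s ^ i * phi1 ν0 a s = mom ν0 i a := by
  have hm := hasSum_moment ν0 i a
  set F : ℕ → ℝ → ℝ := fun k s => (a ^ k / (Nat.factorial k * Nat.factorial (ν0 + k) : ℝ)) *
    (s ^ (ν0 + i + k) * Real.exp (-s)) with hF
  have hint (k : ℕ) : Integrable (F k) (volume.restrict (Set.Ioi 0)) :=
    (integrable_pow_exp _).const_mul _
  have hval (k : ℕ) : ∫ s in Set.Ioi (0 : ℝ), F k s = a ^ k / (Nat.factorial k : ℝ) *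
        ((Nat.factorial (ν0 + i + k) : ℝ) / (Nat.factorial (ν0 + k) : ℝ)) := by
    simp only [hF]
    rw [integral_const_mul, integral_pow_exp]
    field_simp
  have hnorm (k : ℕ) : ∫ s in Set.Ioi (0 : ℝ), ‖F k s‖ = ∫ s in Set.Ioi (0 : ℝ), F k s := by
    refine setIntegral_congr_fun measurableSet_Ioi fun s hs => ?_
    have hs : (0 : ℝ) < s := hs
    simp only [hF]
    rw [Real.norm_of_nonneg (by positivity)]
  have h := hasSum_integral_of_summable_integral_norm hint
    (by simp only [hnorm, hval]; exact hm.summable)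
  simp only [hval] at h
  rw [mom, hm.unique h]
  congr 1
  ext s
  simp only [hF, phi1, hyp0F1R]
  rw [← tsum_mul_left, ← tsum_mul_left, ← tsum_mul_left]
  refine tsum_congr fun k => ?_
  rw [gamma_nat', Real.Gamma_nat_eq_factorial, neg_mul, neg_neg, mul_pow, pow_add, pow_add]
  have e2 : (Nat.factorial ν0 : ℝ) ≠ 0 := by exact_mod_cast Nat.factorial_ne_zero _
  field_simp

lemma measurableSet_posOrth (r : ℕ) : MeasurableSet (posOrth r) := by
  have : posOrth r = Set.pi Set.univ fun _ => Set.Ioi (0 : ℝ) := by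
    ext t; simp [posOrth]
  rw [this]
  exact MeasurableSet.univ_pi fun _ => measurableSet_Ioi

lemma restrict_posOrth (r : ℕ) : (volume : Measure (Fin r → ℝ)).restrict (posOrth r) =
    Measure.pi fun _ : Fin r => (volume : Measure ℝ).restrict (Set.Ioi 0) := by
  have : posOrth r = Set.pi Set.univ fun _ => Set.Ioi (0 : ℝ) := by
    ext t; simp [posOrth]
  rw [this, volume_pi, Measure.restrict_pi_pi]

lemma integral_x_phi1 (ν0 i : ℕ) {a T : ℝ} (ha : 0 < a) (hT : 0 < T) :
    ∫ x in Set.Ioi (0 : ℝ), x ^ i * phi1 ν0 a (x / T) = T ^ (i + 1) * mom ν0 i a := by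
  have h := integral_comp_mul_left_Ioi (fun s => s ^ i * phi1 ν0 a s) 0 (inv_pos.2 hT)
  rw [mul_zero, integral_phi1 ν0 i ha, inv_inv, smul_eq_mul] at h
  rw [pow_succ, mul_assoc, ← h, ← integral_const_mul]
  congr 1; ext x
  rw [div_eq_inv_mul, mul_pow, ← mul_assoc, ← mul_assoc, inv_pow,
    mul_inv_cancel₀ (by positivity), one_mul]

lemma Phi_moment (r ν0 : ℕ) (ν : Fin r → ℕ) {a : ℝ} (ha : 0 < a) (i : ℕ) :
    ∫ x in Set.Ioi (0 : ℝ), x ^ i * PhiR r ν0 ν (-a) x =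
      (∏ l, (Nat.factorial (ν l + i) : ℝ)) * mom ν0 i a := by
  set W : (Fin r → ℝ) → ℝ := fun t => ∏ l, (t l) ^ ((ν l : ℝ) - 1) * Real.exp (-t l) with hW
  set f : ℝ → (Fin r → ℝ) → ℝ := fun x t => x ^ i * (W t * phi1 ν0 a (x / ∏ l, t l)) with hf
  have hPhi (x : ℝ) : x ^ i * PhiR r ν0 ν (-a) x = ∫ t in posOrth r, f x t := by
    simp only [hf, PhiR]
    rw [integral_const_mul, ← integral_const_mul]
    congr 2; ext t
    simp only [hW, phi1]
    ring
  simp only [hPhi]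
  have hmeas : Measurable (Function.uncurry f) := by
    have h1 : Measurable W := by
      refine Finset.measurable_prod _ fun l _ => ?_
      exact ((measurable_pi_apply l).pow_const _).mul (by fun_prop)
    have h2 : Measurable fun t : Fin r → ℝ => ∏ l, t l :=
      Finset.measurable_prod _ fun l _ => measurable_pi_apply l
    have h3 := measurable_phi1 ν0 a
    simp only [hf, Function.uncurry_def]
    refine (measurable_fst.pow_const i).mul ((h1.comp measurable_snd).mul (h3.comp ?_))
    exact measurable_fst.div (h2.comp measurable_snd)
  have hprodpos (t : Fin r → ℝ) (ht : t ∈ posOrth r) : 0 < ∏ l, t l :=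
    Finset.prod_pos fun l _ => ht l
  have hinner (t : Fin r → ℝ) (ht : t ∈ posOrth r) : ∫ x in Set.Ioi (0 : ℝ), f x t =
      (∏ l, (t l) ^ (ν l + i) * Real.exp (-t l)) * mom ν0 i a := by
    simp only [hf]
    have : ∀ x : ℝ, x ^ i * (W t * phi1 ν0 a (x / ∏ l, t l)) =
      W t * (x ^ i * phi1 ν0 a (x / ∏ l, t l)) := fun x => by ring
    simp only [this]
    rw [integral_const_mul, integral_x_phi1 ν0 i ha (hprodpos t ht), ← mul_assoc]
    congr 1
    simp only [hW]
    rw [← Finset.prod_pow, ← Finset.prod_mul_distrib]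
    refine Finset.prod_congr rfl fun l _ => ?_
    have hl := ht l
    rw [Real.rpow_sub_one hl.ne', Real.rpow_natCast, pow_succ, pow_add]
    field_simp
  have hWpos (t : Fin r → ℝ) (ht : t ∈ posOrth r) : 0 < W t :=
    Finset.prod_pos fun l _ => mul_pos (Real.rpow_pos_of_pos (ht l) _) (Real.exp_pos _)
  have hgint : Integrable (fun t : Fin r → ℝ => (∏ l, (t l) ^ (ν l + i) * Real.exp (-t l)) *
      mom ν0 i a) (volume.restrict (posOrth r)) := by
    rw [restrict_posOrth]
    exact (Integrable.fintype_prod (f := fun l (s : ℝ) => s ^ (ν l + i) * Real.exp (-s))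
      fun l => integrable_pow_exp _).mul_const _
  have hinnorm (t : Fin r → ℝ) (ht : t ∈ posOrth r) : ∫ x in Set.Ioi (0 : ℝ), ‖f x t‖ =
      (∏ l, (t l) ^ (ν l + i) * Real.exp (-t l)) * mom ν0 i a := by
    rw [← hinner t ht]
    refine setIntegral_congr_fun measurableSet_Ioi fun x hx => ?_
    have hx : (0 : ℝ) < x := hx
    refine Real.norm_of_nonneg ?_
    exact mul_nonneg (by positivity) (mul_nonneg (hWpos t ht).le
      (phi1_nonneg ν0 ha (div_pos hx (hprodpos t ht))))
  have hint : Integrable (Function.uncurry f)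
      ((volume.restrict (Set.Ioi (0 : ℝ))).prod (volume.restrict (posOrth r))) := by
    rw [integrable_prod_iff' hmeas.aestronglyMeasurable]
    constructor
    · filter_upwards [ae_restrict_mem (measurableSet_posOrth r)] with t ht
      refine Integrable.of_integral_ne_zero ?_
      simp only [Function.uncurry_apply_pair]
      rw [hinner t ht]
      refine (mul_pos (Finset.prod_pos fun l _ => ?_) (mom_pos ν0 i ha)).ne'
      exact mul_pos (pow_pos (ht l) _) (Real.exp_pos _)
    · refine hgint.congr ?_
      filter_upwards [ae_restrict_mem (measurableSet_posOrth r)] with t ht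
      simp only [Function.uncurry_apply_pair]
      rw [hinnorm t ht]
  rw [integral_integral_swap hint, setIntegral_congr_fun (measurableSet_posOrth r)
    (fun t ht => hinner t ht), integral_mul_const, restrict_posOrth,
    integral_fintype_prod_eq_prod (fun l (s : ℝ) => s ^ (ν l + i) * Real.exp (-s))]
  simp only [integral_pow_exp]

/-- **Proposition 2.1** (correlation-kernel form of the eigenvalue density, residue form). -/
theorem prop_2_1 (r ν0 N : ℕ) (ν : Fin r → ℕ) (a : Fin N → ℝ)
    (ha : ∀ j, 0 < a j) (hdist : Function.Injective a)
    (g : Matrix (Fin N) (Fin N) ℝ)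
    (hg : ∀ i j, g i j = ∫ x in Set.Ioi (0 : ℝ), x ^ (i : ℕ) * PhiR r ν0 ν (-(a j)) x)
    (hdet : g.det ≠ 0)
    (Z : ℝ) (hZ : Z = (Nat.factorial N : ℝ) * g.det)
    (K : ℝ → ℝ → ℝ)
    (hK : ∀ x y : ℝ, K x y = ∫ u in Set.Ioi (0 : ℝ),
      u ^ ν0 * Real.exp (-u) * Psi r ν0 ν u x *
        ∑ j, PhiR r ν0 ν (-(a j)) y * Real.exp (-(a j)) *
          ∏ l ∈ Finset.univ.erase j, (-u - a l) / (a j - a l))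
    (x : Fin N → ℝ) (hx : ∀ i, 0 < x i) :
    (1 / Z) * (Matrix.of fun i j : Fin N => x j ^ (i : ℕ)).det *
        (Matrix.of fun i j : Fin N => PhiR r ν0 ν (-(a i)) (x j)).det =
      (1 / (Nat.factorial N : ℝ)) * (Matrix.of fun i j : Fin N => K (x i) (x j)).det := by
  set c : Fin N → ℝ := fun j => Real.exp (-(a j)) with hc
  set P : Fin N → Polynomial ℝ := fun j => Polynomial.C (Real.exp (-(a j))) *
    (Lagrange.basis Finset.univ a j).comp (-Polynomial.X) with hP
  have hPeval (j : Fin N) (u : ℝ) : (P j).eval u = Real.exp (-(a j)) *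
      ∏ l ∈ Finset.univ.erase j, (-u - a l) / (a j - a l) := by
    simp only [hP, Polynomial.eval_mul, Polynomial.eval_C, Polynomial.eval_comp,
      Polynomial.eval_neg, Polynomial.eval_X, Lagrange.basis, Polynomial.eval_prod,
      Lagrange.basisDivisor, Polynomial.eval_sub]
    congr 1
    refine Finset.prod_congr rfl fun l _ => ?_
    rw [div_eq_inv_mul]
  set η : ℝ → Fin N → ℝ := fun x j => ∫ u in Set.Ioi (0 : ℝ),
    u ^ ν0 * Real.exp (-u) * Psi r ν0 ν u x * (P j).eval u with hη
  have hK' (x y : ℝ) : K x y = ∑ j, η x j * PhiR r ν0 ν (-(a j)) y := by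
    have := Psi_linear r ν0 N ν x P (fun j => PhiR r ν0 ν (-(a j)) y)
    rw [hK]
    simp only [Polynomial.eval_finsetSum, Polynomial.eval_mul, Polynomial.eval_C, hPeval] at this
    simp only [hη, hPeval, mul_assoc] at this ⊢
    rw [this]
    exact Finset.sum_congr rfl fun j _ => mul_comm _ _
  have hgη (i : Fin N) (x : ℝ) : ∑ j, g i j * η x j = x ^ (i : ℕ) := by
    have h1 := Psi_linear r ν0 N ν x P (fun j => g i j)
    rw [← h1, ← Psi_lagP r ν0 ν x i, ← integral_const_mul]
    congr 1; ext u
    have hq : (lagP ν0 i).comp (-Polynomial.X) =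
        ∑ j, Polynomial.C ((lagP ν0 i).eval (-(a j))) * Lagrange.basis Finset.univ a j := by
      have hd : ((lagP ν0 i).comp (-Polynomial.X)).degree < (Finset.univ : Finset (Fin N)).card := by
        refine lt_of_le_of_lt Polynomial.degree_le_natDegree ?_
        rw [Finset.card_univ, Fintype.card_fin, Polynomial.natDegree_comp, Polynomial.natDegree_neg,
          Polynomial.natDegree_X, mul_one]
        exact_mod_cast lt_of_le_of_lt (natDegree_lagP ν0 i) i.2
      have h := Lagrange.eq_interpolate (s := Finset.univ) (v := a) (hdist.injOn) hd
      rw [Lagrange.interpolate_apply] at h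
      simpa only [Polynomial.eval_comp, Polynomial.eval_neg, Polynomial.eval_X] using h
    have hq' := congrArg (Polynomial.eval (-u)) hq
    simp only [Polynomial.eval_comp, Polynomial.eval_neg, Polynomial.eval_X, neg_neg,
      Polynomial.eval_finsetSum, Polynomial.eval_mul, Polynomial.eval_C] at hq'
    rw [hq', Polynomial.eval_finsetSum, Finset.mul_sum, Finset.mul_sum, Finset.mul_sum]
    refine Finset.sum_congr rfl fun j _ => ?_
    rw [hg, Phi_moment r ν0 ν (ha j), mom]
    simp only [hP, Polynomial.eval_mul, Polynomial.eval_C, Polynomial.eval_comp,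
      Polynomial.eval_neg, Polynomial.eval_X]
    have he : Real.exp (a j) * Real.exp (-(a j)) = 1 := by rw [← Real.exp_add]; simp
    linear_combination (∏ l, (Nat.factorial (ν l + i) : ℝ)) *
      ((Nat.factorial (ν0 + i) : ℝ) / Nat.factorial ν0) * (lagP ν0 i).eval (-(a j)) *
      (u ^ ν0 * Real.exp (-u) * Psi r ν0 ν u x) *
      (Lagrange.basis Finset.univ a j).eval (-u) * he
  set M : Matrix (Fin N) (Fin N) ℝ := Matrix.of fun j k => η (x k) j with hM
  have hV : (Matrix.of fun i j : Fin N => x j ^ (i : ℕ)) = g * M := by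
    ext i k
    simp [Matrix.mul_apply, hM, hgη]
  have hKM : (Matrix.of fun i j : Fin N => K (x i) (x j)) =
      M.transpose * (Matrix.of fun i j : Fin N => PhiR r ν0 ν (-(a i)) (x j)) := by
    ext i k
    simp [Matrix.mul_apply, hM, hK']
  rw [hV, hKM, Matrix.det_mul, Matrix.det_mul, Matrix.det_transpose, hZ]
  have hN : (Nat.factorial N : ℝ) ≠ 0 := by exact_mod_cast Nat.factorial_ne_zero _
  field_simp

end
end

section
/- Proposition 2.5, formula (2.30) (average of the reciprocal characteristic polynomial for a biorthogonal ensemble with monomial functions). For every z ∈ ℂ at positive distance from I, ∫_{I^N} ∏_{l=1}^N (z−x_l)^{−1} Q_N(x₁,…,x_N) dx₁⋯dx_N = ∫_I (z−u)^{−1} ( ∑_{j=1}^N c_{N,j} ξ_j(u) ) du, where c_{i,j} denotes the (i,j) entry of the transposed inverse of the matrix [g_{ij}]_{i,j=1}^N. -/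
open MeasureTheory Filter Topology

noncomputable section


/-- The Andreief integration identity. -/
theorem andreief_aux {m : ℕ} (μ : Measure ℝ) [SigmaFinite μ]
    (φ ψ : Fin m → ℝ → ℂ)
    (hint : ∀ i j, Integrable (fun x => φ i x * ψ j x) μ) :
    ∫ x : Fin m → ℝ, (Matrix.of fun i j => φ i (x j)).det *
      (Matrix.of fun i j => ψ i (x j)).det ∂(Measure.pi fun _ => μ) =
    (Nat.factorial m : ℂ) * (Matrix.of fun i j => ∫ x, φ i x * ψ j x ∂μ).det := by
  set G : Matrix (Fin m) (Fin m) ℂ := Matrix.of fun i j => ∫ x, φ i x * ψ j x ∂μ with hG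
  have h1 : ∀ x : Fin m → ℝ, (Matrix.of fun i j => φ i (x j)).det *
      (Matrix.of fun i j => ψ i (x j)).det =
      ∑ τ : Equiv.Perm (Fin m), ∑ σ : Equiv.Perm (Fin m),
        ((Equiv.Perm.sign τ : ℤ) : ℂ) * ((Equiv.Perm.sign σ : ℤ) : ℂ) *
          ∏ j, (φ (σ j) (x j) * ψ (τ j) (x j)) := by
    intro x
    rw [Matrix.det_apply', Matrix.det_apply', Finset.sum_mul_sum, Finset.sum_comm]
    refine Finset.sum_congr rfl fun τ _ => Finset.sum_congr rfl fun σ _ => ?_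
    rw [Finset.prod_mul_distrib]
    simp only [Matrix.of_apply]
    ring
  have hI : ∀ σ τ : Equiv.Perm (Fin m), Integrable
      (fun x : Fin m → ℝ => ∏ j, (φ (σ j) (x j) * ψ (τ j) (x j))) (Measure.pi fun _ => μ) :=
    fun σ τ => Integrable.fintype_prod (f := fun j x => φ (σ j) x * ψ (τ j) x)
      (fun j => hint _ _)
  simp_rw [h1]
  rw [integral_finsetSum _ fun τ _ => integrable_finsetSum _ fun σ _ => (hI σ τ).const_mul _]
  have h2 : ∀ τ : Equiv.Perm (Fin m), ∫ x : Fin m → ℝ, ∑ σ : Equiv.Perm (Fin m),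
        ((Equiv.Perm.sign τ : ℤ) : ℂ) * ((Equiv.Perm.sign σ : ℤ) : ℂ) *
          ∏ j, (φ (σ j) (x j) * ψ (τ j) (x j)) ∂(Measure.pi fun _ => μ) = G.det := by
    intro τ
    rw [integral_finsetSum _ fun σ _ => (hI σ τ).const_mul _]
    have h3 := Matrix.det_permute' τ G
    rw [Matrix.det_apply'] at h3
    have h4 : ((Equiv.Perm.sign τ : ℤ) : ℂ) * ((Equiv.Perm.sign τ : ℤ) : ℂ) = 1 := by
      rcases Int.units_eq_one_or (Equiv.Perm.sign τ) with h | h <;> simp [h]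
    calc _ = ((Equiv.Perm.sign τ : ℤ) : ℂ) * ∑ σ : Equiv.Perm (Fin m),
          ((Equiv.Perm.sign σ : ℤ) : ℂ) * ∏ i, G.submatrix id τ (σ i) i := by
          rw [Finset.mul_sum]
          refine Finset.sum_congr rfl fun σ _ => ?_
          rw [integral_const_mul,
            integral_fintype_prod_eq_prod (fun j x => φ (σ j) x * ψ (τ j) x), mul_assoc]
          simp [hG]
      _ = G.det := by rw [h3, ← mul_assoc, h4, one_mul]
  simp_rw [h2]
  simp [Fintype.card_perm]

/-- Cauchy-type determinant identity. -/
theorem det_recip_aux (n : ℕ) (x : Fin (n + 1) → ℂ) (z : ℂ) (hz : ∀ l, z - x l ≠ 0) :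
    (∏ l, (z - x l)⁻¹) * (Matrix.of fun i j : Fin (n + 1) => x j ^ (i : ℕ)).det =
    (Matrix.of fun i j : Fin (n + 1) =>
      if i = Fin.last n then (z - x j)⁻¹ else x j ^ (i : ℕ)).det := by
  let p : Fin (n + 1) → Polynomial ℂ :=
    Fin.cons 1 (fun i : Fin n => (Polynomial.X - Polynomial.C z) * Polynomial.X ^ (i : ℕ))
  have hp := Matrix.det_eval_matrixOfPolynomials_eq_det_vandermonde x p
    (by
      intro i
      refine Fin.cases ?_ (fun i => ?_) i
      · simp [p]
      · simp only [p, Fin.cons_succ]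
        rw [Polynomial.natDegree_mul (Polynomial.X_sub_C_ne_zero z) (by simp)]
        simp [add_comm])
    (by
      intro i
      refine Fin.cases ?_ (fun i => ?_) i
      · simp [p]
      · simp only [p, Fin.cons_succ]
        exact (Polynomial.monic_X_sub_C z).mul (Polynomial.monic_X_pow _))
  have hV : (Matrix.of fun i j : Fin (n + 1) => x j ^ (i : ℕ)).det =
      (Matrix.vandermonde x).det := by
    rw [← Matrix.det_transpose]; rfl
  rw [hV, hp, ← Matrix.det_mul_column]
  rw [← Matrix.det_transpose]
  have hd : (-1 : ℂ) ^ n * (-1 : ℂ) ^ n = 1 := by rw [← mul_pow]; simp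
  set M := (Matrix.of fun i j : Fin (n + 1) =>
      if i = Fin.last n then (z - x j)⁻¹ else x j ^ (i : ℕ)) with hM
  have h5 := Matrix.det_permute (finRotate (n + 1)).symm M
  have h6 := Matrix.det_mul_column (fun i : Fin (n + 1) => if i = 0 then (1 : ℂ) else -1)
    (M.submatrix (finRotate (n + 1)).symm id)
  have h7 : ∏ i : Fin (n + 1), (if i = 0 then (1 : ℂ) else -1) = (-1) ^ n := by
    rw [Fin.prod_univ_succ]; simp
  rw [h5, h7] at h6
  simp only [Equiv.Perm.sign_symm, sign_finRotate] at h6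
  push_cast at h6
  rw [← mul_assoc, hd, one_mul] at h6
  rw [← h6]
  congr 1
  ext i j
  refine Fin.cases ?_ (fun i => ?_) i
  · have : (finRotate (n + 1)).symm 0 = Fin.last n := by
      rw [Equiv.symm_apply_eq]; simp
    simp only [Matrix.of_apply, Matrix.submatrix_apply, Matrix.transpose_apply, id, this, hM]
    simp [p]
  · have : (finRotate (n + 1)).symm i.succ = i.castSucc := by
      rw [Equiv.symm_apply_eq]; simp
    have hz' := hz j
    simp only [Matrix.of_apply, Matrix.submatrix_apply, Matrix.transpose_apply, id, this, hM,
      (Fin.castSucc_lt_last i).ne]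
    simp [p]
    field_simp
    ring

/-- **Proposition 2.5, formula (2.30)** (average of the reciprocal characteristic
polynomial for a biorthogonal ensemble with monomial functions). -/
theorem prop_2_5_reciprocal (n : ℕ) (I : Set ℝ) (hI : I.OrdConnected)
    (hIm : MeasurableSet I)
    (ξ : Fin (n + 1) → ℝ → ℝ) (hmeas : ∀ j, Measurable (ξ j))
    (hint : ∀ i j : Fin (n + 1), IntegrableOn (fun x => |x| ^ (i : ℕ) * |ξ j x|) I)
    (g : Matrix (Fin (n + 1)) (Fin (n + 1)) ℝ)
    (hg : ∀ i j, g i j = ∫ x in I, x ^ (i : ℕ) * ξ j x)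
    (hdet : g.det ≠ 0)
    (Q : (Fin (n + 1) → ℝ) → ℝ)
    (hQ : ∀ x, Q x = (1 / ((Nat.factorial (n + 1) : ℝ) * g.det)) *
      (Matrix.of fun i j : Fin (n + 1) => x j ^ (i : ℕ)).det *
      (Matrix.of fun i j : Fin (n + 1) => ξ i (x j)).det)
    (z : ℂ) (δ : ℝ) (hδ : 0 < δ) (hzI : ∀ x ∈ I, δ ≤ ‖z - (x : ℂ)‖) :
    ∫ x in {x : Fin (n + 1) → ℝ | ∀ l, x l ∈ I},
        (∏ l, (z - (x l : ℂ))⁻¹) * ((Q x : ℝ) : ℂ) =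
      ∫ u in I, (z - (u : ℂ))⁻¹ *
        ((∑ j, g⁻¹ j (Fin.last n) * ξ j u : ℝ) : ℂ) := by
  have hne : ∀ x ∈ I, z - (x : ℂ) ≠ 0 := fun x hx h => by
    have := hzI x hx
    rw [h, norm_zero] at this
    linarith
  set μ : Measure ℝ := volume.restrict I with hμ
  let φ : Fin (n + 1) → ℝ → ℂ := fun i x =>
    if i = Fin.last n then (z - (x : ℂ))⁻¹ else (x : ℂ) ^ (i : ℕ)
  let ψ : Fin (n + 1) → ℝ → ℂ := fun i x => (ξ i x : ℂ)
  have hξint : ∀ j, Integrable (ξ j) μ := fun j => by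
    have := hint 0 j
    simp only [Fin.val_zero, pow_zero, one_mul] at this
    exact (integrable_norm_iff (hmeas j).aestronglyMeasurable).1 this
  have hlast : ∀ j, Integrable (fun x : ℝ => (z - (x : ℂ))⁻¹ * (ξ j x : ℂ)) μ := fun j => by
    refine Integrable.bdd_mul (c := δ⁻¹) (hξint j).ofReal ?_ ?_
    · exact Measurable.aestronglyMeasurable (by fun_prop)
    · filter_upwards [ae_restrict_mem hIm] with x hx
      rw [norm_inv]
      exact inv_anti₀ hδ (hzI x hx)
  have hφψ : ∀ i j, Integrable (fun x => φ i x * ψ j x) μ := by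
    intro i j
    by_cases hi : i = Fin.last n
    · simpa [φ, ψ, hi] using hlast j
    · have h1 : Integrable (fun x : ℝ => x ^ (i : ℕ) * ξ j x) μ := by
        refine (integrable_norm_iff ?_).1 ?_
        · have := hmeas j
          exact Measurable.aestronglyMeasurable (by fun_prop)
        · simpa [IntegrableOn] using hint i j
      simpa [φ, ψ, hi] using h1.ofReal (𝕜 := ℂ)
  have hA := andreief_aux μ φ ψ hφψ
  -- the measure on the cube
  have hset : {x : Fin (n + 1) → ℝ | ∀ l, x l ∈ I} = Set.univ.pi fun _ => I := by
    ext x; simp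
  have hmeasI : MeasurableSet {x : Fin (n + 1) → ℝ | ∀ l, x l ∈ I} := by
    rw [hset]; exact MeasurableSet.univ_pi fun _ => hIm
  have hpi : (volume : Measure (Fin (n + 1) → ℝ)).restrict {x | ∀ l, x l ∈ I} =
      Measure.pi fun _ => μ := by
    rw [hset, volume_pi, Measure.restrict_pi_pi]
  have hL : ∫ x in {x : Fin (n + 1) → ℝ | ∀ l, x l ∈ I},
        (∏ l, (z - (x l : ℂ))⁻¹) * ((Q x : ℝ) : ℂ) =
      ∫ x in {x : Fin (n + 1) → ℝ | ∀ l, x l ∈ I},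
        (1 / ((Nat.factorial (n + 1) : ℂ) * (g.det : ℂ))) *
        ((Matrix.of fun i j => φ i (x j)).det * (Matrix.of fun i j => ψ i (x j)).det) := by
    refine setIntegral_congr_fun hmeasI fun x hx => ?_
    have h1 := det_recip_aux n (fun l => (x l : ℂ)) z (fun l => hne _ (hx l))
    have h2 : (((Matrix.of fun i j : Fin (n + 1) => x j ^ (i : ℕ)).det : ℝ) : ℂ) =
        (Matrix.of fun i j : Fin (n + 1) => (x j : ℂ) ^ (i : ℕ)).det := by
      have := RingHom.map_det Complex.ofRealHom
        (Matrix.of fun i j : Fin (n + 1) => x j ^ (i : ℕ))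
      rw [Complex.ofRealHom_eq_coe] at this
      rw [this]
      congr 1
      ext i j
      simp
    have h3 : (((Matrix.of fun i j : Fin (n + 1) => ξ i (x j)).det : ℝ) : ℂ) =
        (Matrix.of fun i j : Fin (n + 1) => ψ i (x j)).det := by
      have := RingHom.map_det Complex.ofRealHom
        (Matrix.of fun i j : Fin (n + 1) => ξ i (x j))
      rw [Complex.ofRealHom_eq_coe] at this
      rw [this]
      congr 1
    have h4 : (Matrix.of fun i j => φ i (x j)).det = (Matrix.of fun i j : Fin (n + 1) =>
      if i = Fin.last n then (z - (x j : ℂ))⁻¹ else (x j : ℂ) ^ (i : ℕ)).det := rfl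
    rw [h4, ← h1, hQ]
    push_cast
    rw [h2, h3]
    ring
  rw [hL, integral_const_mul, hpi, hA]
  set b : Fin (n + 1) → ℂ := fun j => ∫ u, (z - (u : ℂ))⁻¹ * (ξ j u : ℂ) ∂μ with hb
  have hG : (Matrix.of fun i j => ∫ x, φ i x * ψ j x ∂μ) =
      (g.map Complex.ofReal).updateRow (Fin.last n) b := by
    ext i j
    by_cases hi : i = Fin.last n
    · subst hi
      simp [φ, ψ, hb]
    · rw [Matrix.updateRow_ne hi]
      simp only [Matrix.of_apply, Matrix.map_apply, hg, φ, ψ, hi, if_false]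
      rw [← integral_complex_ofReal]
      simp
  have hdetC : (g.det : ℂ) ≠ 0 := by exact_mod_cast hdet
  have hfac : (Nat.factorial (n + 1) : ℂ) ≠ 0 := by exact_mod_cast Nat.factorial_ne_zero _
  have hexp : ((g.map Complex.ofReal).updateRow (Fin.last n) b).det =
      ∑ j, b j * ((g.adjugate j (Fin.last n) : ℝ) : ℂ) := by
    rw [← Matrix.cramer_transpose_apply, Matrix.cramer_eq_adjugate_mulVec,
      ← Matrix.adjugate_transpose]
    have := RingHom.map_adjugate Complex.ofRealHom g
    simp only [Matrix.mulVec, dotProduct, Matrix.transpose_apply]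
    refine Finset.sum_congr rfl fun j _ => ?_
    rw [mul_comm]
    congr 1
    exact (congrFun (congrFun this j) (Fin.last n)).symm
  rw [hG, hexp]
  have hR : ∫ u, (z - (u : ℂ))⁻¹ * ((∑ j, g⁻¹ j (Fin.last n) * ξ j u : ℝ) : ℂ) ∂μ =
      ∑ j, ((g⁻¹ j (Fin.last n) : ℝ) : ℂ) * b j := by
    have : ∀ u : ℝ, (z - (u : ℂ))⁻¹ * ((∑ j, g⁻¹ j (Fin.last n) * ξ j u : ℝ) : ℂ) =
        ∑ j, ((g⁻¹ j (Fin.last n) : ℝ) : ℂ) * ((z - (u : ℂ))⁻¹ * (ξ j u : ℂ)) := by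
      intro u
      push_cast
      rw [Finset.mul_sum]
      exact Finset.sum_congr rfl fun j _ => by ring
    simp_rw [this]
    rw [integral_finsetSum _ fun j _ => (hlast j).const_mul _]
    simp_rw [integral_const_mul]
    rfl
  rw [hR, Finset.mul_sum, Finset.mul_sum]
  refine Finset.sum_congr rfl fun j _ => ?_
  rw [Matrix.inv_def, Matrix.smul_apply, Ring.inverse_eq_inv', smul_eq_mul]
  push_cast
  field_simp

end
end
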